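/- Sign of the defocusing combination: let 0 < c < 8/225, g(u) := (Real.log (Real.log (10 + u²)))^c, f(u) := u⁵·g(u), F(u) := ∫₀ᵘ f(v) dv. Then 4·F(u) − u·f(u) ≤ 0 for every u ∈ ℝ. -/

import Mathlib

open MeasureTheory Set

noncomputable section

abbrev Space : Type := EuclideanSpace ℝ (Fin 3)

/-- The loglog weight `g(u) = (log log (10 + u²))^c`. -/
def g (c u : ℝ) : ℝ := Real.log (Real.log (10 + u ^ 2)) ^ c

/-- The nonlinearity `f(u) = u⁵ g(u)`. -/
def f (c u : ℝ) : ℝ := u ^ 5 * g c u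

/-- The potential `F(u) = ∫₀ᵘ f(v) dv`. -/
def Fpot (c u : ℝ) : ℝ := ∫ v in (0:ℝ)..u, f c v

/-- First time derivative `∂ₜ u`. -/
def dt1 (u : ℝ → Space → ℝ) (t : ℝ) (x : Space) : ℝ := deriv (fun s => u s x) t

/-- Second time derivative `∂ₜₜ u`. -/
def dt2 (u : ℝ → Space → ℝ) (t : ℝ) (x : Space) : ℝ := deriv (fun s => dt1 u s x) t

/-- The spatial Laplacian. -/
def lap (h : Space → ℝ) (x : Space) : ℝ :=
  ∑ i : Fin 3, fderiv ℝ (fun y => fderiv ℝ h y (EuclideanSpace.single i 1)) x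
    (EuclideanSpace.single i 1)

/-- A classical solution of `∂ₜₜ u - Δ u = -f(u)` on the time interval `J`:
infinitely differentiable, compactly supported in space for each fixed time,
and satisfying the equation. -/
structure IsClassicalSol (c : ℝ) (J : Set ℝ) (u : ℝ → Space → ℝ) : Prop where
  smooth : ContDiffOn ℝ (⊤ : ℕ∞) (fun p : ℝ × Space => u p.1 p.2) (J ×ˢ (Set.univ : Set Space))
  compactSpt : ∀ t ∈ J, HasCompactSupport (u t)
  eqn : ∀ t ∈ J, ∀ x : Space, dt2 u t x - lap (u t) x = - f c (u t x)

/-- The conserved energy. -/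
def energy (c : ℝ) (u : ℝ → Space → ℝ) (t : ℝ) : ℝ :=
  (1/2) * (∫ x : Space, (dt1 u t x) ^ 2)
    + (1/2) * (∫ x : Space, ‖gradient (u t) x‖ ^ 2)
    + ∫ x : Space, Fpot c (u t x)

/-- Spatial `L^r` norm. -/
def LxNorm (r : ℝ) (h : Space → ℝ) : ℝ := (∫ x : Space, |h x| ^ r) ^ (1 / r)

/-- Mixed norm `L^q_t L^r_x (J × ℝ³)`. -/
def LtLxNorm (q r : ℝ) (J : Set ℝ) (u : ℝ → Space → ℝ) : ℝ :=
  (∫ t in J, (LxNorm r (u t)) ^ q) ^ (1 / q)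

/-- The homogeneous `H̃² = Ḣ² ∩ Ḣ¹` norm. -/
def H2tildeNorm (h : Space → ℝ) : ℝ :=
  (∫ x : Space, ‖iteratedFDeriv ℝ 2 h x‖ ^ 2) ^ ((1:ℝ)/2)
    + (∫ x : Space, ‖gradient h x‖ ^ 2) ^ ((1:ℝ)/2)

/-- The inhomogeneous `H¹` norm. -/
def H1Norm (h : Space → ℝ) : ℝ :=
  (∫ x : Space, (h x) ^ 2) ^ ((1:ℝ)/2)
    + (∫ x : Space, ‖gradient h x‖ ^ 2) ^ ((1:ℝ)/2)

/-- Spatial `L^r` norm restricted to the interior of the light cone at time `t`,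
i.e. the norm of `h · 1_{|x| < t}`. -/
def LxConeNorm (r t : ℝ) (h : Space → ℝ) : ℝ :=
  (∫ x in Metric.ball (0:Space) t, |h x| ^ r) ^ (1 / r)

/-- Mixed norm `L^q_t L^r_x (Γ₊(J))` on the truncated forward light cone. -/
def LtLxConeNorm (q r : ℝ) (J : Set ℝ) (u : ℝ → Space → ℝ) : ℝ :=
  (∫ t in J, (LxConeNorm r t (u t)) ^ q) ^ (1 / q)

/-- The local energy `e(t)` (integral over the ball `|x| ≤ t`). -/
def locEnergy (c : ℝ) (u : ℝ → Space → ℝ) (t : ℝ) : ℝ :=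
  (1/2) * (∫ x in Metric.closedBall (0:Space) t, (dt1 u t x) ^ 2)
    + (1/2) * (∫ x in Metric.closedBall (0:Space) t, ‖gradient (u t) x‖ ^ 2)
    + ∫ x in Metric.closedBall (0:Space) t, Fpot c (u t x)

/-!
The weight `g c` is nondecreasing in `|u|`. Hence replacing `g c v` by its endpoint value `g c u`
in `F(u) = ∫₀ᵘ v⁵ g(v) dv` can only increase the integral, for either sign of `u`, so that
`6 F(u) ≤ u⁶ g(u) = u f(u)`. Since `u f(u) ≥ 0`, the factor `6` may be lowered to `4`.
-/

theorem integral_odd_pow_mul_le {n : ℕ} (hn : Odd n) {w : ℝ → ℝ} {u : ℝ}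
    (hint : IntervalIntegrable (fun v => v ^ n * w v) volume 0 u)
    (hw : ∀ v ∈ uIcc 0 u, w v ≤ w u) :
    ∫ v in (0 : ℝ)..u, v ^ n * w v ≤ u ^ (n + 1) / (n + 1) * w u := by
  have hconst : IntervalIntegrable (fun v : ℝ => v ^ n * w u) volume 0 u :=
    ((continuous_pow n).mul_const (w u)).intervalIntegrable 0 u
  have hendpoint : ∫ v in (0 : ℝ)..u, v ^ n * w u = u ^ (n + 1) / (n + 1) * w u := by
    simp [integral_pow]
  rw [← hendpoint]
  rcases le_total 0 u with hu | hu
  · refine intervalIntegral.integral_mono_on hu hint hconst fun v hv => ?_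
    exact mul_le_mul_of_nonneg_left (hw v (Icc_subset_uIcc hv)) (pow_nonneg hv.1 n)
  · rw [intervalIntegral.integral_symm u 0, intervalIntegral.integral_symm u 0, neg_le_neg_iff]
    refine intervalIntegral.integral_mono_on hu hconst.symm hint.symm fun v hv => ?_
    exact mul_le_mul_of_nonpos_left (hw v (Icc_subset_uIcc' hv)) (hn.pow_nonpos hv.2)

theorem one_lt_log_ten_add_sq (u : ℝ) : 1 < Real.log (10 + u ^ 2) := by
  rw [Real.lt_log_iff_exp_lt (by positivity)]
  linarith [Real.exp_one_lt_three, sq_nonneg u]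

theorem log_log_ten_add_sq_pos (u : ℝ) : 0 < Real.log (Real.log (10 + u ^ 2)) :=
  Real.log_pos (one_lt_log_ten_add_sq u)

theorem g_nonneg (c u : ℝ) : 0 ≤ g c u :=
  Real.rpow_nonneg (log_log_ten_add_sq_pos u).le c

theorem continuous_g (c : ℝ) : Continuous (g c) := by
  have hlog : Continuous fun u : ℝ => Real.log (10 + u ^ 2) :=
    Continuous.log (by fun_prop) fun u => by positivity
  have hloglog : Continuous fun u : ℝ => Real.log (Real.log (10 + u ^ 2)) :=
    hlog.log fun u => (zero_lt_one.trans (one_lt_log_ten_add_sq u)).ne'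
  exact hloglog.rpow_const fun u => Or.inl (log_log_ten_add_sq_pos u).ne'

theorem g_le_g_of_abs_le {c u v : ℝ} (hc : 0 ≤ c) (h : |v| ≤ |u|) : g c v ≤ g c u := by
  have hsq : 10 + v ^ 2 ≤ 10 + u ^ 2 := add_le_add_right (sq_le_sq.2 h) 10
  have hlog : Real.log (10 + v ^ 2) ≤ Real.log (10 + u ^ 2) :=
    Real.log_le_log (by positivity) hsq
  have hloglog := Real.log_le_log (zero_lt_one.trans (one_lt_log_ten_add_sq v)) hlog
  exact Real.rpow_le_rpow (log_log_ten_add_sq_pos v).le hloglog hc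

theorem continuous_f (c : ℝ) : Continuous (f c) :=
  (continuous_pow 5).mul (continuous_g c)

theorem mul_f_eq_pow_mul_g (c u : ℝ) : u * f c u = u ^ 6 * g c u := by
  rw [f]
  ring

theorem mul_f_nonneg (c u : ℝ) : 0 ≤ u * f c u := by
  rw [mul_f_eq_pow_mul_g]
  exact mul_nonneg (by positivity) (g_nonneg c u)

theorem defocusing_sign_general (c : ℝ) (hc : 0 ≤ c) (u : ℝ) :
    6 * Fpot c u - u * f c u ≤ 0 := by
  have hg : ∀ v ∈ uIcc 0 u, g c v ≤ g c u := fun v hv =>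
    g_le_g_of_abs_le hc (by simpa using abs_sub_left_of_mem_uIcc hv)
  have hF : Fpot c u ≤ u ^ 6 / 6 * g c u :=
    calc Fpot c u ≤ u ^ (5 + 1) / ((5 : ℕ) + 1) * g c u :=
          integral_odd_pow_mul_le (by decide) ((continuous_f c).intervalIntegrable 0 u) hg
      _ = u ^ 6 / 6 * g c u := by norm_num
  rw [mul_f_eq_pow_mul_g]
  linarith

/-- Sign of the defocusing combination. -/
theorem defocusing_sign (c : ℝ) (hc : 0 < c) (hc' : c < 8 / 225) (u : ℝ) :
    4 * Fpot c u - u * f c u ≤ 0 := by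
  linarith [defocusing_sign_general c hc.le u, mul_f_nonneg c u]
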